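/- Let S be a finite nonempty set and Q ∈ ℝ^{S×S} a matrix with Q(s,t) ≥ 0 for all s, t and ∑_{t∈S} Q(s,t) ≤ 1 for all s. Assume that for every s ∈ S there exist a natural number n and a state t ∈ S such that Q^n(s,t) > 0 and ∑_{u∈S} Q(t,u) < 1. Then the matrix I − Q is invertible and the series ∑_{n=0}^∞ Q^n converges to (I − Q)^{−1}. -/

import Mathlib

/-!
The matrix `1 - Q` is injective by a maximum principle: if `Q v = v` and `|v|` attains its maximum
`M > 0` at `s`, then `v = Q ^ (n + 1) v` gives `M ≤ M * ∑ t, (Q ^ (n + 1)) s t` for every `n`, whereas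
the row sum of `Q ^ (n + 1)` at `s` is `< 1` as soon as `Q ^ n` charges a state with positive exit
probability.

Given the inverse, `∑ n < N, Q ^ n = (1 - Q)⁻¹ * (1 - Q ^ N)`. The entries of `Q ^ N` lie in `[0, 1]`,
so these partial sums are bounded entrywise. Having nonnegative terms, the entrywise series therefore
converge, which forces `Q ^ N → 0`, and the same identity then identifies the limit.
-/

open Filter

lemma pow_entry_nonneg {S : Type} [Fintype S] [DecidableEq S] {Q : Matrix S S ℝ}
    (hQ0 : ∀ s t, 0 ≤ Q s t) (n : ℕ) (s t : S) : 0 ≤ (Q ^ n) s t := by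
  induction n generalizing s t with
  | zero =>
    rw [pow_zero, Matrix.one_apply]
    split_ifs <;> norm_num
  | succ n ih =>
    rw [pow_succ, Matrix.mul_apply]
    exact Finset.sum_nonneg fun u _ => mul_nonneg (ih s u) (hQ0 u t)

lemma sum_pow_succ_row {S : Type} [Fintype S] [DecidableEq S] (Q : Matrix S S ℝ) (n : ℕ) (s : S) :
    ∑ u, (Q ^ (n + 1)) s u = ∑ t, (Q ^ n) s t * ∑ u, Q t u := by
  simp only [pow_succ, Matrix.mul_apply, Finset.mul_sum]
  exact Finset.sum_comm

lemma sum_pow_row_le_one {S : Type} [Fintype S] [DecidableEq S] {Q : Matrix S S ℝ}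
    (hQ0 : ∀ s t, 0 ≤ Q s t) (hQ1 : ∀ s, ∑ t, Q s t ≤ 1) (n : ℕ) (s : S) :
    ∑ t, (Q ^ n) s t ≤ 1 := by
  induction n with
  | zero => simp [Matrix.one_apply]
  | succ n ih =>
    rw [sum_pow_succ_row]
    exact (Finset.sum_le_sum fun t _ =>
      mul_le_of_le_one_right (pow_entry_nonneg hQ0 n s t) (hQ1 t)).trans ih

lemma pow_entry_le_one {S : Type} [Fintype S] [DecidableEq S] {Q : Matrix S S ℝ}
    (hQ0 : ∀ s t, 0 ≤ Q s t) (hQ1 : ∀ s, ∑ t, Q s t ≤ 1) (n : ℕ) (s t : S) :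
    (Q ^ n) s t ≤ 1 :=
  (Finset.single_le_sum (f := fun t => (Q ^ n) s t) (fun u _ => pow_entry_nonneg hQ0 n s u)
    (Finset.mem_univ t)).trans (sum_pow_row_le_one hQ0 hQ1 n s)

/-- From every state, the chain has left the state space with positive probability after some
number of steps. -/
lemma exists_sum_pow_row_lt_one {S : Type} [Fintype S] [DecidableEq S] {Q : Matrix S S ℝ}
    (hQ0 : ∀ s t, 0 ≤ Q s t) (hQ1 : ∀ s, ∑ t, Q s t ≤ 1)
    (hreach : ∀ s : S, ∃ (n : ℕ) (t : S), 0 < (Q ^ n) s t ∧ ∑ u, Q t u < 1) (s : S) :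
    ∃ n : ℕ, ∑ u, (Q ^ n) s u < 1 := by
  obtain ⟨n, t, hpos, hlt⟩ := hreach s
  refine ⟨n + 1, ?_⟩
  rw [sum_pow_succ_row]
  refine lt_of_lt_of_le (Finset.sum_lt_sum (fun u _ =>
    mul_le_of_le_one_right (pow_entry_nonneg hQ0 n s u) (hQ1 u))
    ⟨t, Finset.mem_univ t, mul_lt_of_lt_one_right hpos hlt⟩) (sum_pow_row_le_one hQ0 hQ1 n s)

/-- The maximum principle: a transient chain has no nonzero harmonic function. -/
lemma eq_zero_of_mulVec_eq_self {S : Type} [Fintype S] [DecidableEq S] [Nonempty S]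
    {Q : Matrix S S ℝ} (hQ0 : ∀ s t, 0 ≤ Q s t) (hQ1 : ∀ s, ∑ t, Q s t ≤ 1)
    (hreach : ∀ s : S, ∃ (n : ℕ) (t : S), 0 < (Q ^ n) s t ∧ ∑ u, Q t u < 1)
    {v : S → ℝ} (hv : Q.mulVec v = v) : v = 0 := by
  have hpow : ∀ n : ℕ, (Q ^ n).mulVec v = v := by
    intro n
    induction n with
    | zero => simp
    | succ n ih => rw [pow_succ, ← Matrix.mulVec_mulVec, hv, ih]
  obtain ⟨s, hs⟩ := Finite.exists_max fun s => |v s|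
  obtain ⟨n, hn⟩ := exists_sum_pow_row_lt_one hQ0 hQ1 hreach s
  have hle : |v s| ≤ (∑ u, (Q ^ n) s u) * |v s| := by
    calc |v s| = |∑ u, (Q ^ n) s u * v u| := congrArg abs (congrFun (hpow n) s).symm
      _ ≤ ∑ u, |(Q ^ n) s u * v u| := Finset.abs_sum_le_sum_abs _ _
      _ ≤ ∑ u, (Q ^ n) s u * |v s| := by
        refine Finset.sum_le_sum fun u _ => ?_
        rw [abs_mul, abs_of_nonneg (pow_entry_nonneg hQ0 n s u)]
        exact mul_le_mul_of_nonneg_left (hs u) (pow_entry_nonneg hQ0 n s u)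
      _ = _ := (Finset.sum_mul _ _ _).symm
  have h0 : |v s| ≤ 0 := by
    by_contra! h
    nlinarith
  funext t
  exact abs_nonpos_iff.mp ((hs t).trans h0)

theorem stmt_17 {S : Type} [Fintype S] [DecidableEq S] [Nonempty S]
    (Q : Matrix S S ℝ)
    (hQ0 : ∀ s t, 0 ≤ Q s t)
    (hQ1 : ∀ s, ∑ t, Q s t ≤ 1)
    (hreach : ∀ s : S, ∃ (n : ℕ) (t : S), 0 < (Q ^ n) s t ∧ ∑ u, Q t u < 1) :
    IsUnit (1 - Q) ∧
      ∀ s t, Tendsto (fun N : ℕ => ∑ n ∈ Finset.range N, (Q ^ n) s t) atTop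
        (nhds ((1 - Q)⁻¹ s t)) := by
  have hunit : IsUnit (1 - Q) := by
    rw [← Matrix.mulVec_injective_iff_isUnit]
    intro v w hvw
    have h : (1 - Q).mulVec (v - w) = 0 := by
      rw [Matrix.mulVec_sub, sub_eq_zero]
      exact hvw
    rw [Matrix.sub_mulVec, Matrix.one_mulVec, sub_eq_zero] at h
    exact sub_eq_zero.mp (eq_zero_of_mulVec_eq_self hQ0 hQ1 hreach h.symm)
  refine ⟨hunit, ?_⟩
  have hdet : IsUnit (1 - Q).det := (Matrix.isUnit_iff_isUnit_det _).mp hunit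
  have hpartial : ∀ (N : ℕ) (s t : S), ∑ n ∈ Finset.range N, (Q ^ n) s t =
      ∑ u, (1 - Q)⁻¹ s u * ((1 : Matrix S S ℝ) u t - (Q ^ N) u t) := by
    intro N s t
    have h : ∑ n ∈ Finset.range N, Q ^ n = (1 - Q)⁻¹ * (1 - Q ^ N) := by
      rw [← mul_neg_geom_sum, Matrix.nonsing_inv_mul_cancel_left _ _ hdet]
    rw [← Matrix.sum_apply, h, Matrix.mul_apply]
    rfl
  have hzero : ∀ s t, Tendsto (fun N : ℕ => (Q ^ N) s t) atTop (nhds 0) := by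
    intro s t
    refine (summable_of_sum_range_le (c := ∑ u, |(1 - Q)⁻¹ s u|)
      (fun n => pow_entry_nonneg hQ0 n s t) fun N => ?_).tendsto_atTop_zero
    rw [hpartial]
    refine Finset.sum_le_sum fun u _ => (le_abs_self _).trans ?_
    rw [abs_mul]
    refine mul_le_of_le_one_right (abs_nonneg _) ?_
    -- Both entries lie in `[0, 1]`.
    have h1 := pow_entry_nonneg hQ0 N u t
    have h2 := pow_entry_le_one hQ0 hQ1 N u t
    have h3 := pow_entry_nonneg hQ0 0 u t
    have h4 := pow_entry_le_one hQ0 hQ1 0 u t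
    rw [pow_zero] at h3 h4
    rw [abs_le]
    constructor <;> linarith
  intro s t
  simp only [hpartial]
  have hlim := tendsto_finsetSum (Finset.univ : Finset S) fun u _ =>
    ((hzero u t).const_sub ((1 : Matrix S S ℝ) u t)).const_mul ((1 - Q)⁻¹ s u)
  simp only [sub_zero] at hlim
  rwa [← Matrix.mul_apply, mul_one] at hlim
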